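/- Let h : [0,∞) → [0,∞) be a non-decreasing continuous function with lim_{ζ→∞} h(ζ) = ∞, let g(ζ) = ∫₀^ζ h(ζ′) dζ′, and fix γ̃ > 0 and Φ₀ > 0. Then there exists a function φ : (0,1] → [0,∞), depending only on h, γ̃ and Φ₀, with lim_{r↓0} φ(r) = 0, such that for every measurable function ζ : [0,1] → [0,∞) with ∫₀^1 ζ(v) dv ≤ Φ₀ and every r ∈ (0,1], one has ∫₀^r exp(−γ̃ ∫₀^v g(ζ(v′)) dv′) · ζ(v) dv ≤ φ(r). -/

import Mathlib

open Set Filter MeasureTheory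

/-- `∫₀^r exp(-γ ∫₀^v f) f(v) dv ≤ 1/γ` for non-negative integrable `f`, with integrability. -/
lemma exp_int_bound (f : ℝ → ℝ) (hf0 : ∀ v, 0 ≤ f v) (r γ : ℝ) (hr : 0 < r) (hγ : 0 < γ)
    (hf : IntervalIntegrable f volume 0 r) :
    IntervalIntegrable (fun v => Real.exp (-(γ * ∫ t in (0:ℝ)..v, f t)) * f v) volume 0 r ∧
    (∫ v in (0:ℝ)..r, Real.exp (-(γ * ∫ t in (0:ℝ)..v, f t)) * f v) ≤ 1 / γ := by
  set F : ℝ → ℝ := fun v => -(γ⁻¹ * Real.exp (-(γ * ∫ t in (0:ℝ)..v, f t))) with hF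
  have hsub : ∀ x ∈ uIcc 0 r, IntervalIntegrable f volume 0 x := by
    intro x hx
    exact hf.mono_set (uIcc_subset_uIcc_left hx)
  have hmono : MonotoneOn F (uIcc 0 r) := by
    intro x hx y hy hxy
    have h1 : (∫ t in (0:ℝ)..x, f t) ≤ ∫ t in (0:ℝ)..y, f t := by
      have := intervalIntegral.integral_interval_sub_left (hsub y hy) (hsub x hx)
      have h2 := intervalIntegral.integral_nonneg (μ := volume) (f := f) hxy (fun u _ => hf0 u)
      linarith
    simp only [hF]
    have : 0 < γ⁻¹ := inv_pos.mpr hγ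
    gcongr
  have hae : ∀ᵐ x, x ∈ uIoc 0 r →
      deriv F x = Real.exp (-(γ * ∫ t in (0:ℝ)..x, f t)) * f x := by
    filter_upwards [hf.ae_hasDerivAt_integral] with x hx hxr
    have h1 := hx (uIoc_subset_uIcc hxr) 0 left_mem_uIcc
    have h2 := (((h1.const_mul γ).neg.exp).const_mul γ⁻¹).neg
    have h3 := h2.deriv
    rw [show F = -(fun y => γ⁻¹ * Real.exp (-(γ * ∫ t in (0:ℝ)..y, f t))) from rfl]
    refine Eq.trans h3 ?_
    field_simp
    simp [mul_comm]
  have hint := hmono.intervalIntegrable_deriv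
  have hmem := hmono.intervalIntegral_deriv_mem_uIcc
  have h01 : F 0 ≤ F r := hmono left_mem_uIcc right_mem_uIcc hr.le
  rw [uIcc_of_le (by linarith)] at hmem
  constructor
  · refine hint.congr_ae ?_
    exact (ae_restrict_iff' measurableSet_uIoc).mpr hae
  · rw [← intervalIntegral.integral_congr_ae hae]
    refine hmem.2.trans ?_
    have : 0 < γ⁻¹ * Real.exp (-(γ * ∫ t in (0:ℝ)..r, f t)) := by positivity
    simp only [hF, intervalIntegral.integral_same, mul_zero, neg_zero, Real.exp_zero, mul_one,
      one_div]
    linarith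

/-- Deterministic-control version of Lemma 7.5 (eval_0): when `h(∞) = ∞`
there exists a function `φ : (0,1] → [0,∞)`, depending only on `h`, `γ̃`
and `Φ₀`, with `φ(r) → 0` as `r ↓ 0`, such that the discounted proceeds of
every admissible selling rate `ζ` (non-negative, measurable, with
`∫₀^1 ζ ≤ Φ₀`) over `[0,r]` are bounded by `φ(r)`:
`∫₀^r exp(−γ̃ ∫₀^v g(ζ(v′)) dv′) ζ(v) dv ≤ φ(r)`. -/
theorem discounted_proceeds_uniformly_small
    (h : ℝ → ℝ)
    (h_nonneg : ∀ ζ, 0 ≤ ζ → 0 ≤ h ζ)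
    (h_mono : MonotoneOn h (Set.Ici 0))
    (h_cont : ContinuousOn h (Set.Ici 0))
    (h_top : Tendsto h atTop atTop)
    (g : ℝ → ℝ) (hg : ∀ ζ, g ζ = ∫ z in (0:ℝ)..ζ, h z)
    (γt Φ₀ : ℝ) (hγt : 0 < γt) (hΦ₀ : 0 < Φ₀) :
    ∃ φ : ℝ → ℝ,
      (∀ r ∈ Set.Ioc (0:ℝ) 1, 0 ≤ φ r) ∧
      Tendsto φ (nhdsWithin 0 (Set.Ioi 0)) (nhds 0) ∧
      ∀ ζ : ℝ → ℝ, Measurable ζ → (∀ v, 0 ≤ ζ v) →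
        IntegrableOn ζ (Set.Icc 0 1) →
        IntegrableOn (fun v => g (ζ v)) (Set.Icc 0 1) →
        (∫ v in (0:ℝ)..1, ζ v) ≤ Φ₀ →
        ∀ r ∈ Set.Ioc (0:ℝ) 1,
          (∫ v in (0:ℝ)..r, Real.exp (-(γt * ∫ v' in (0:ℝ)..v, g (ζ v'))) * ζ v) ≤ φ r := by
  have hii : ∀ a b : ℝ, 0 ≤ a → a ≤ b → IntervalIntegrable h volume a b := by
    intro a b ha hab
    refine ContinuousOn.intervalIntegrable (h_cont.mono ?_)
    rw [uIcc_of_le hab]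
    intro x hx
    exact ha.trans hx.1
  have hg0 : ∀ x, 0 ≤ x → 0 ≤ g x := by
    intro x hx
    rw [hg]
    exact intervalIntegral.integral_nonneg hx (fun u hu => h_nonneg u hu.1)
  have hM : ∀ n : ℕ, ∃ M : ℝ, 0 ≤ M ∧ ∀ x, 0 ≤ x → x ≤ M + ((n:ℝ) + 1)⁻¹ * g x := by
    intro n
    obtain ⟨M, hM⟩ := (tendsto_atTop.mp h_top ((n:ℝ) + 1)).exists_forall_of_atTop
    have hn : (0:ℝ) < (n:ℝ) + 1 := by positivity
    refine ⟨max M 0, le_max_right _ _, fun x hx => ?_⟩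
    rcases le_total x (max M 0) with hxM | hxM
    · have := mul_nonneg (inv_nonneg.mpr hn.le) (hg0 x hx)
      linarith
    · set N := max M 0 with hN
      have hN0 : 0 ≤ N := le_max_right _ _
      have h1 : ((n:ℝ) + 1) * (x - N) ≤ g x := by
        rw [hg, ← intervalIntegral.integral_add_adjacent_intervals (hii 0 N le_rfl hN0)
          (hii N x hN0 hxM)]
        have h2 := intervalIntegral.integral_nonneg (μ := volume) hN0
          (fun u hu => h_nonneg u hu.1)
        have h3 : (∫ _ in N..x, ((n:ℝ) + 1)) ≤ ∫ z in N..x, h z :=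
          intervalIntegral.integral_mono_on hxM (by simp) (hii N x hN0 hxM)
            (fun u hu => hM u ((le_max_left _ _).trans hu.1))
        rw [intervalIntegral.integral_const, smul_eq_mul] at h3
        linarith
      have h4 : x - N ≤ ((n:ℝ) + 1)⁻¹ * g x := by
        rw [inv_mul_eq_div, le_div_iff₀ hn]
        linarith
      linarith
  choose M hM0 hMx using hM
  let B : ℝ → ℕ → ℝ := fun r n => ((n:ℝ) + 1)⁻¹ * (1 / γt) + M n * r
  have hB0 : ∀ r, 0 ≤ r → ∀ n, 0 ≤ B r n := by
    intro r hr n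
    have := hM0 n
    simp only [B]
    positivity
  have hbdd : ∀ r, 0 ≤ r → BddBelow (range (B r)) := by
    intro r hr
    refine ⟨0, ?_⟩
    rintro _ ⟨n, rfl⟩
    exact hB0 r hr n
  refine ⟨fun r => ⨅ n, B r n, ?_, ?_, ?_⟩
  · intro r hr
    exact le_ciInf (hB0 r hr.1.le)
  · rw [tendsto_order]
    constructor
    · intro a ha
      filter_upwards [self_mem_nhdsWithin] with r hr
      exact ha.trans_le (le_ciInf (hB0 r (le_of_lt hr)))
    · intro a ha
      have ht : Tendsto (fun n : ℕ => ((n:ℝ) + 1)⁻¹ * (1 / γt)) atTop (nhds 0) := by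
        have := (tendsto_one_div_add_atTop_nhds_zero_nat (𝕜 := ℝ)).mul_const (1 / γt)
        simpa using this
      obtain ⟨n, hn⟩ := (ht.eventually (gt_mem_nhds ha)).exists
      have hc : Tendsto (fun r => B r n) (nhdsWithin 0 (Ioi 0)) (nhds (B 0 n)) := by
        have : Continuous (fun r => B r n) := by
          simp only [B]
          fun_prop
        exact this.continuousAt.tendsto.mono_left nhdsWithin_le_nhds
      have hB : B 0 n < a := by
        simpa [B] using hn
      filter_upwards [hc.eventually (gt_mem_nhds hB), self_mem_nhdsWithin] with r hr hr0
      exact (ciInf_le (hbdd r (le_of_lt hr0)) n).trans_lt hr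
  · intro ζ hζm hζ0 hζi hgi _ r hr
    refine le_ciInf (fun n => ?_)
    have hsub : uIcc 0 r ⊆ Icc 0 1 := by
      rw [uIcc_of_le hr.1.le]
      exact Icc_subset_Icc_right hr.2
    have hgr : IntervalIntegrable (fun v => g (ζ v)) volume 0 r :=
      (hgi.mono_set hsub).intervalIntegrable
    have hζr : IntervalIntegrable ζ volume 0 r := (hζi.mono_set hsub).intervalIntegrable
    obtain ⟨h1, h2⟩ := exp_int_bound (fun v => g (ζ v)) (fun v => hg0 _ (hζ0 v)) r γt hr.1 hγt hgr
    have hcont : ContinuousOn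
        (fun v => Real.exp (-(γt * ∫ v' in (0:ℝ)..v, g (ζ v')))) (uIcc 0 r) := by
      have := intervalIntegral.continuousOn_primitive_interval (μ := volume)
        (hgi.mono_set hsub)
      fun_prop
    have hL := hζr.continuousOn_mul hcont
    have hR := (h1.const_mul ((n:ℝ) + 1)⁻¹).add
      (intervalIntegrable_const (c := M n) (μ := volume) (a := 0) (b := r))
    have hle := intervalIntegral.integral_mono_on hr.1.le hL hR (by
      intro v hv
      have e0 := Real.exp_pos (-(γt * ∫ v' in (0:ℝ)..v, g (ζ v')))
      have e1 : Real.exp (-(γt * ∫ v' in (0:ℝ)..v, g (ζ v'))) ≤ 1 := by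
        rw [Real.exp_le_one_iff]
        have := intervalIntegral.integral_nonneg (μ := volume) (f := fun v' => g (ζ v')) hv.1
          (fun u _ => hg0 _ (hζ0 u))
        have := mul_nonneg hγt.le this
        linarith
      have e2 := mul_le_mul_of_nonneg_left (hMx n (ζ v) (hζ0 v)) e0.le
      have e3 := mul_le_mul_of_nonneg_right e1 (hM0 n)
      nlinarith)
    refine hle.trans ?_
    rw [intervalIntegral.integral_add (h1.const_mul _) intervalIntegrable_const,
      intervalIntegral.integral_const_mul, intervalIntegral.integral_const, smul_eq_mul]
    have := mul_le_mul_of_nonneg_left h2 (show (0:ℝ) ≤ ((n:ℝ) + 1)⁻¹ by positivity)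
    simp only [B]
    linarith
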